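/- Fix 1 ≤ q < ∞. Let σ be uniformly distributed on S_n, let μ_n = E_n[ρ_q] and s_n = √(Var_n ρ_q). Then there is a constant C such that for all n ≥ 2, sup_{x ∈ ℝ} | P_n[ (ρ_q(σ²) − μ_n)/s_n ≤ x ] − Φ(x) | ≤ C (log n)/n^{1/2}; in particular, the statistic ρ_{q,2}(σ) = Σ_{i=1}^n |σ²(i) − i|^q is asymptotically Gaussian under the same normalization as ρ_q. -/

import Mathlib

open scoped BigOperators Classical
open Finset Filter

/-- Probability of an event under the uniform measure on `S_n`. -/
noncomputable def Pn {n : ℕ} (p : Equiv.Perm (Fin n) → Prop) : ℝ :=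
  ((Finset.univ.filter p).card : ℝ) / (Fintype.card (Equiv.Perm (Fin n)) : ℝ)

/-- Expectation under the uniform measure on `S_n`. -/
noncomputable def En {n : ℕ} (g : Equiv.Perm (Fin n) → ℝ) : ℝ :=
  (∑ σ : Equiv.Perm (Fin n), g σ) / (Fintype.card (Equiv.Perm (Fin n)) : ℝ)

/-- Variance under the uniform measure on `S_n`. -/
noncomputable def VarN {n : ℕ} (g : Equiv.Perm (Fin n) → ℝ) : ℝ :=
  En (fun σ => (g σ - En g) ^ 2)

/-- Spearman's metric `ρ_q(σ) = Σ_i |σ(i) − i|^q`. -/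
noncomputable def rhoq (q : ℝ) {n : ℕ} (σ : Equiv.Perm (Fin n)) : ℝ :=
  ∑ i : Fin n, |((σ i : ℕ) : ℝ) - ((i : ℕ) : ℝ)| ^ q

/-- The standard normal cumulative distribution function `Φ`. -/
noncomputable def stdNormalCDF (x : ℝ) : ℝ :=
  ∫ t in Set.Iic x, Real.exp (-t ^ 2 / 2) / Real.sqrt (2 * Real.pi)

/-!
Stein's method, through the zero-bias identity obtained by composing a uniform permutation with a
transposition, shows that `∑ i, a i (π i)` is Gaussian up to `O(A / s)` in Kolmogorov distance,
where `A` bounds the oscillation of the rows of `a` and `s` is the standard deviation.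

To pass from `π` to `σ²`, note that by Burnside's lemma `2 ^ (number of cycles)` has mean at most
`n + 1`, so `σ` has `O(log n)` cycles with probability `1 - O(1 / n)`, and `σ²` has at most twice as
many. Each transposition joining two cycles changes two values, hence `σ²` and an independent
uniform `τ` are both within Hamming distance `O(log n)` of full cycles. Full cycles are conjugate
and the uniform measure is invariant under conjugation, so `σ²` can be coupled with a uniform
permutation at Hamming distance `O(log n)`. For Spearman's metric one changed value costs at most
`n ^ q`, while the standard deviation is at least a constant times `n ^ (q + 1 / 2)`.
-/

section Gaussian

open MeasureTheory ProbabilityTheory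

local notation "φ" => gaussianPDFReal 0 1
local notation "Φ" => stdNormalCDF

lemma stdNormalPDF_eq (t : ℝ) : φ t = Real.exp (-t ^ 2 / 2) / √(2 * Real.pi) := by
  simp [gaussianPDFReal, div_eq_inv_mul]

lemma stdNormalPDF_pos (t : ℝ) : 0 < φ t :=
  gaussianPDFReal_pos 0 1 t one_ne_zero

lemma stdNormalPDF_neg (t : ℝ) : φ (-t) = φ t := by
  simp only [stdNormalPDF_eq, neg_sq]

lemma stdNormalPDF_le_one (t : ℝ) : φ t ≤ 1 := by
  have one_le_sqrt : 1 ≤ √(2 * Real.pi) := Real.one_le_sqrt.mpr (by linarith [Real.pi_gt_three])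
  rw [stdNormalPDF_eq, div_le_one (by positivity)]
  exact (Real.exp_le_one_iff.mpr (by linarith [sq_nonneg t])).trans one_le_sqrt

lemma hasDerivAt_stdNormalPDF (t : ℝ) : HasDerivAt φ (-t * φ t) t := by
  have h : HasDerivAt (fun t : ℝ => -t ^ 2 / 2) (-t) t :=
    ((hasDerivAt_pow 2 t).neg.div_const 2).congr_deriv (by ring)
  rw [funext stdNormalPDF_eq]
  exact (h.exp.div_const _).congr_deriv (by ring)

lemma continuous_stdNormalPDF : Continuous φ :=
  continuous_iff_continuousAt.mpr fun t => (hasDerivAt_stdNormalPDF t).continuousAt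

lemma integrable_neg_id_mul_stdNormalPDF : Integrable fun t => -t * φ t := by
  convert ((integrable_mul_exp_neg_mul_sq (b := 1 / 2) (by norm_num)).neg.div_const
    √(2 * Real.pi)) using 2 with t
  rw [stdNormalPDF_eq, Pi.neg_apply, show -t ^ 2 / 2 = -(1 / 2) * t ^ 2 by ring]
  ring

lemma stdNormalCDF_eq_integral (x : ℝ) : Φ x = ∫ t in Set.Iic x, φ t := by
  simp only [stdNormalPDF_eq, stdNormalCDF]

lemma stdNormalCDF_eq_cdf : Φ = cdf (gaussianReal 0 1) := by
  ext x
  rw [cdf_eq_real, measureReal_def, gaussianReal_apply_eq_integral 0 one_ne_zero,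
    ENNReal.toReal_ofReal (integral_nonneg fun t => (stdNormalPDF_pos t).le),
    stdNormalCDF_eq_integral]

lemma stdNormalCDF_nonneg (x : ℝ) : 0 ≤ Φ x :=
  stdNormalCDF_eq_cdf ▸ cdf_nonneg _ x

lemma stdNormalCDF_le_one (x : ℝ) : Φ x ≤ 1 :=
  stdNormalCDF_eq_cdf ▸ cdf_le_one _ x

lemma monotone_stdNormalCDF : Monotone Φ :=
  stdNormalCDF_eq_cdf ▸ monotone_cdf _

lemma stdNormalCDF_neg (x : ℝ) : Φ (-x) = 1 - Φ x := by
  have reflect : Φ (-x) = ∫ t in Set.Ioi x, φ t := by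
    simp only [stdNormalCDF_eq_integral, ← integral_comp_neg_Ioi, stdNormalPDF_neg]
  have total := integral_add_compl (s := Set.Iic x) measurableSet_Iic
    (integrable_gaussianPDFReal 0 1)
  rw [Set.compl_Iic, integral_gaussianPDFReal_eq_one 0 one_ne_zero,
    ← stdNormalCDF_eq_integral] at total
  linarith

lemma hasDerivAt_stdNormalCDF (x : ℝ) : HasDerivAt Φ (φ x) x := by
  have cdf_eq : Φ = fun y => Φ 0 + ∫ t in (0 : ℝ)..y, φ t := by
    ext y
    rw [← intervalIntegral.integral_Iic_sub_Iic (integrable_gaussianPDFReal 0 1).integrableOn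
      (integrable_gaussianPDFReal 0 1).integrableOn, ← stdNormalCDF_eq_integral,
      ← stdNormalCDF_eq_integral]
    ring
  rw [cdf_eq]
  exact (continuous_stdNormalPDF.integral_hasStrictDerivAt 0 x).hasDerivAt.const_add _

lemma continuous_stdNormalCDF : Continuous Φ :=
  continuous_iff_continuousAt.mpr fun x => (hasDerivAt_stdNormalCDF x).continuousAt

lemma stdNormalCDF_add_le (x : ℝ) {δ : ℝ} (hδ : 0 ≤ δ) : Φ (x + δ) ≤ Φ x + δ := by
  have increment_le := image_sub_le_mul_sub_of_deriv_le
    (fun y => (hasDerivAt_stdNormalCDF y).differentiableAt)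
    (fun y => (hasDerivAt_stdNormalCDF y).deriv.trans_le (stdNormalPDF_le_one y))
    (le_add_of_nonneg_right hδ : x ≤ x + δ)
  linarith

lemma abs_sub_stdNormalCDF_le_of_shift {x p δ η : ℝ} (hδ : 0 ≤ δ)
    (upper : p ≤ Φ (x + δ) + η) (lower : Φ (x - δ) - η ≤ p) : |p - Φ x| ≤ δ + η := by
  have right := stdNormalCDF_add_le x hδ
  have left := stdNormalCDF_add_le (x - δ) hδ
  rw [sub_add_cancel] at left
  exact abs_sub_le_iff.mpr ⟨by linarith, by linarith⟩

lemma neg_mul_stdNormalCDF_le (w : ℝ) : -w * Φ w ≤ φ w := by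
  have vanish : Tendsto φ atBot (nhds 0) :=
    tendsto_zero_of_hasDerivAt_of_integrableOn_Iic (a := 0) (fun t _ => hasDerivAt_stdNormalPDF t)
      integrable_neg_id_mul_stdNormalPDF.integrableOn
      (integrable_gaussianPDFReal 0 1).integrableOn
  have tail : ∫ t in Set.Iic w, -t * φ t = φ w := by
    rw [integral_Iic_of_hasDerivAt_of_tendsto' (fun t _ => hasDerivAt_stdNormalPDF t)
      integrable_neg_id_mul_stdNormalPDF.integrableOn vanish, sub_zero]
  rw [stdNormalCDF_eq_integral, ← integral_const_mul, ← tail]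
  refine setIntegral_mono_on ((integrable_gaussianPDFReal 0 1).integrableOn.const_mul _)
    integrable_neg_id_mul_stdNormalPDF.integrableOn measurableSet_Iic fun t ht => ?_
  exact mul_le_mul_of_nonneg_right (neg_le_neg ht) (stdNormalPDF_pos t).le

lemma monotone_stdNormalCDF_div_stdNormalPDF : Monotone fun w => Φ w / φ w := by
  have hderiv (w : ℝ) : HasDerivAt (fun w => Φ w / φ w) (1 - -w * Φ w / φ w) w := by
    refine ((hasDerivAt_stdNormalCDF w).div (hasDerivAt_stdNormalPDF w)
      (stdNormalPDF_pos w).ne').congr_deriv ?_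
    have := (stdNormalPDF_pos w).ne'
    field_simp
  refine monotone_of_hasDerivAt_nonneg hderiv fun w => ?_
  exact sub_nonneg.mpr ((div_le_one (stdNormalPDF_pos w)).mpr (neg_mul_stdNormalCDF_le w))

lemma stdNormalCDF_le_of_nonpos {w : ℝ} (hw : w ≤ 0) : Φ w ≤ 3 * φ w := by
  have sqrt_le : √(2 * Real.pi) ≤ 3 := Real.sqrt_le_iff.mpr ⟨by norm_num, by
    linarith [Real.pi_lt_four]⟩
  have ratio_zero : Φ 0 / φ 0 ≤ 3 := by
    have pdf_zero : φ 0 = 1 / √(2 * Real.pi) := by simp [stdNormalPDF_eq]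
    rw [pdf_zero, div_div_eq_mul_div, div_one]
    exact (mul_le_of_le_one_left (Real.sqrt_nonneg _) (stdNormalCDF_le_one 0)).trans sqrt_le
  exact (div_le_iff₀ (stdNormalPDF_pos w)).mp
    ((monotone_stdNormalCDF_div_stdNormalPDF hw).trans ratio_zero)

lemma stdNormalCDF_mul_one_sub_le (w : ℝ) : Φ w * (1 - Φ w) ≤ Φ w :=
  mul_le_of_le_one_right (stdNormalCDF_nonneg w) (by linarith [stdNormalCDF_nonneg w])

lemma stdNormalCDF_mul_one_sub_le_pdf (w : ℝ) : Φ w * (1 - Φ w) ≤ 3 * φ w := by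
  wlog hw : w ≤ 0 generalizing w
  · have := this (-w) (by linarith)
    rwa [stdNormalCDF_neg, sub_sub_cancel, mul_comm (1 - Φ w), stdNormalPDF_neg] at this
  exact (stdNormalCDF_mul_one_sub_le w).trans (stdNormalCDF_le_of_nonpos hw)

lemma abs_mul_stdNormalCDF_mul_one_sub_le_pdf (w : ℝ) : |w| * (Φ w * (1 - Φ w)) ≤ φ w := by
  wlog hw : w ≤ 0 generalizing w
  · have := this (-w) (by linarith)
    rwa [stdNormalCDF_neg, sub_sub_cancel, mul_comm (1 - Φ w), abs_neg, stdNormalPDF_neg] at this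
  rw [abs_of_nonpos hw]
  exact (mul_le_mul_of_nonneg_left (stdNormalCDF_mul_one_sub_le w) (by linarith)).trans
    (neg_mul_stdNormalCDF_le w)

end Gaussian

section Stein

open ProbabilityTheory

local notation "φ" => gaussianPDFReal 0 1
local notation "Φ" => stdNormalCDF

lemma sub_le_mul_sub_of_right_deriv_le {f f' : ℝ → ℝ} {a b M : ℝ} (hab : a ≤ b)
    (hf : ContinuousOn f (Set.Icc a b))
    (hf' : ∀ t ∈ Set.Ico a b, HasDerivWithinAt f (f' t) (Set.Ici t) t)
    (bound : ∀ t ∈ Set.Ico a b, f' t ≤ M) : f b - f a ≤ M * (b - a) := by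
  have hline (t : ℝ) : HasDerivAt (fun t => f a + M * (t - a)) M t :=
    ((((hasDerivAt_id t).sub_const a).const_mul M).const_add (f a)).congr_deriv (mul_one M)
  have below_line := image_le_of_deriv_right_le_deriv_boundary hf hf' (by simp)
    (fun t _ => (hline t).continuousAt.continuousWithinAt)
    (fun t _ => (hline t).hasDerivWithinAt) bound (Set.right_mem_Icc.mpr hab)
  linarith

lemma mul_sub_le_sub_of_le_right_deriv {f f' : ℝ → ℝ} {a b m : ℝ} (hab : a ≤ b)
    (hf : ContinuousOn f (Set.Icc a b))
    (hf' : ∀ t ∈ Set.Ico a b, HasDerivWithinAt f (f' t) (Set.Ici t) t)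
    (bound : ∀ t ∈ Set.Ico a b, m ≤ f' t) : m * (b - a) ≤ f b - f a := by
  have neg_bound := sub_le_mul_sub_of_right_deriv_le hab hf.neg (fun t ht => (hf' t ht).neg)
    fun t ht => neg_le_neg (bound t ht)
  simp only [Pi.neg_apply] at neg_bound
  linarith

/-- The bounded solution of Stein's equation `f' w - w * f w = 1_{w < x} - Φ x`. -/
noncomputable def steinSol (x w : ℝ) : ℝ :=
  Φ (min w x) * (1 - Φ (max w x)) / φ w

lemma steinSol_nonneg (x w : ℝ) : 0 ≤ steinSol x w :=
  div_nonneg (mul_nonneg (stdNormalCDF_nonneg _) (sub_nonneg.mpr (stdNormalCDF_le_one _)))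
    (stdNormalPDF_pos w).le

lemma steinSol_le (x w : ℝ) : steinSol x w ≤ Φ w * (1 - Φ w) / φ w := by
  refine div_le_div_of_nonneg_right (mul_le_mul ?_ ?_ ?_ (stdNormalCDF_nonneg w))
    (stdNormalPDF_pos w).le
  · exact monotone_stdNormalCDF (min_le_left w x)
  · exact sub_le_sub_left (monotone_stdNormalCDF (le_max_left w x)) 1
  · exact sub_nonneg.mpr (stdNormalCDF_le_one _)

lemma abs_steinSol_le (x w : ℝ) : |steinSol x w| ≤ 3 := by
  rw [abs_of_nonneg (steinSol_nonneg x w)]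
  exact (steinSol_le x w).trans
    ((div_le_iff₀ (stdNormalPDF_pos w)).mpr (stdNormalCDF_mul_one_sub_le_pdf w))

lemma abs_mul_steinSol_le (x w : ℝ) : |w * steinSol x w| ≤ 1 := by
  rw [abs_mul, abs_of_nonneg (steinSol_nonneg x w)]
  refine (mul_le_mul_of_nonneg_left (steinSol_le x w) (abs_nonneg w)).trans ?_
  rw [← mul_div_assoc, div_le_one (stdNormalPDF_pos w)]
  exact abs_mul_stdNormalCDF_mul_one_sub_le_pdf w

lemma continuous_steinSol (x : ℝ) : Continuous (steinSol x) :=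
  ((continuous_stdNormalCDF.comp (continuous_id.min continuous_const)).mul
    (continuous_const.sub (continuous_stdNormalCDF.comp (continuous_id.max continuous_const)))).div
    continuous_stdNormalPDF fun w => (stdNormalPDF_pos w).ne'

/-- The right derivative of `steinSol x`; at the kink `w = x` the left one is larger by `1`. -/
noncomputable def steinSolDeriv (x w : ℝ) : ℝ :=
  w * steinSol x w + (if w < x then 1 else 0) - Φ x

lemma hasDerivWithinAt_steinSol (x w : ℝ) :
    HasDerivWithinAt (steinSol x) (steinSolDeriv x w) (Set.Ici w) w := by
  have hpdf := (stdNormalPDF_pos w).ne'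
  rcases lt_or_ge w x with hw | hw
  · have branch : steinSol x =ᶠ[nhds w] fun w => Φ w * (1 - Φ x) / φ w := by
      filter_upwards [Iio_mem_nhds hw] with y hy
      rw [steinSol, min_eq_left hy.le, max_eq_right hy.le]
    refine (((((hasDerivAt_stdNormalCDF w).mul_const (1 - Φ x)).div (hasDerivAt_stdNormalPDF w)
      hpdf).congr_of_eventuallyEq branch).congr_deriv ?_).hasDerivWithinAt
    rw [steinSolDeriv, branch.eq_of_nhds, if_pos hw]
    field_simp
    ring
  · have branch : ∀ y ∈ Set.Ici w, steinSol x y = Φ x * (1 - Φ y) / φ y :=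
      fun y hy => by rw [steinSol, min_eq_right (hw.trans hy), max_eq_left (hw.trans hy)]
    refine ((((hasDerivAt_stdNormalCDF w).const_sub 1).const_mul (Φ x)).div
      (hasDerivAt_stdNormalPDF w) hpdf).hasDerivWithinAt.congr branch
      (branch w Set.self_mem_Ici) |>.congr_deriv ?_
    rw [steinSolDeriv, branch w Set.self_mem_Ici, if_neg hw.not_gt]
    field_simp
    ring

lemma abs_steinSolDeriv_le (x w : ℝ) : |steinSolDeriv x w| ≤ 2 := by
  have hmul := abs_le.mp (abs_mul_steinSol_le x w)
  have hnonneg := stdNormalCDF_nonneg x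
  have hle := stdNormalCDF_le_one x
  rw [steinSolDeriv, abs_le]
  split_ifs <;> constructor <;> linarith

lemma lipschitzWith_steinSol (x : ℝ) : LipschitzWith 2 (steinSol x) := by
  refine .of_dist_le_mul fun b a => ?_
  wlog hab : a ≤ b generalizing a b
  · simpa only [dist_comm] using this a b (le_of_not_ge hab)
  rw [Real.dist_eq, Real.dist_eq]
  simpa only [NNReal.coe_ofNat, Real.norm_eq_abs, abs_of_nonneg (sub_nonneg.mpr hab)] using
    norm_image_sub_le_of_norm_deriv_right_le_segment (continuous_steinSol x).continuousOn
      (fun t _ => hasDerivWithinAt_steinSol x t) (fun t _ => abs_steinSolDeriv_le x t) b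
      (Set.right_mem_Icc.mpr hab)

lemma abs_mul_steinSol_sub_le {x w t δ : ℝ} (ht : |t - w| ≤ δ) :
    |t * steinSol x t - w * steinSol x w| ≤ (2 * |w| + 3) * δ := by
  have hlip : |steinSol x t - steinSol x w| ≤ 2 * δ :=
    ((lipschitzWith_steinSol x).dist_le_mul t w).trans (mul_le_mul_of_nonneg_left ht (by norm_num))
  calc |t * steinSol x t - w * steinSol x w|
      = |(t - w) * steinSol x t + w * (steinSol x t - steinSol x w)| := by ring_nf
    _ ≤ |t - w| * |steinSol x t| + |w| * |steinSol x t - steinSol x w| := by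
      simpa only [abs_mul] using
        abs_add_le ((t - w) * steinSol x t) (w * (steinSol x t - steinSol x w))
    _ ≤ δ * 3 + |w| * (2 * δ) := by
      gcongr
      · exact (abs_nonneg _).trans ht
      · exact abs_steinSol_le x t
    _ = (2 * |w| + 3) * δ := by ring

lemma steinSolDeriv_le {x w t δ : ℝ} (ht : |t - w| ≤ δ) :
    steinSolDeriv x t ≤
      w * steinSol x w + (if w ≤ x + δ then 1 else 0) - Φ x + (2 * |w| + 3) * δ := by
  have hmul := (abs_le.mp (abs_mul_steinSol_sub_le (x := x) ht)).2
  have hind : (if t < x then (1 : ℝ) else 0) ≤ if w ≤ x + δ then 1 else 0 := by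
    have := (abs_le.mp ht).1
    split_ifs <;> linarith
  rw [steinSolDeriv]
  linarith

lemma le_steinSolDeriv {x w t δ : ℝ} (ht : |t - w| ≤ δ) (htδ : t < w + δ) :
    w * steinSol x w + (if w ≤ x - δ then 1 else 0) - Φ x - (2 * |w| + 3) * δ ≤
      steinSolDeriv x t := by
  have hmul := (abs_le.mp (abs_mul_steinSol_sub_le (x := x) ht)).1
  have hind : (if w ≤ x - δ then (1 : ℝ) else 0) ≤ if t < x then 1 else 0 := by
    split_ifs <;> linarith
  rw [steinSolDeriv]
  linarith

lemma steinSol_sub_mul_sub_le {x w u v δ : ℝ} (hu : |u - w| ≤ δ) (hv : |v - w| ≤ δ) :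
    (steinSol x u - steinSol x v) * (u - v) ≤
      (w * steinSol x w + (if w ≤ x + δ then 1 else 0) - Φ x + (2 * |w| + 3) * δ) *
        (u - v) ^ 2 := by
  wlog hvu : v ≤ u generalizing u v
  · convert this hv hu (le_of_not_ge hvu) using 1 <;> ring
  rw [pow_two, ← mul_assoc]
  refine mul_le_mul_of_nonneg_right ?_ (sub_nonneg.mpr hvu)
  refine sub_le_mul_sub_of_right_deriv_le hvu (continuous_steinSol x).continuousOn
    (fun t _ => hasDerivWithinAt_steinSol x t) fun t ht => steinSolDeriv_le ?_
  rw [abs_le] at hu hv ⊢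
  constructor <;> linarith [ht.1, ht.2]

lemma le_steinSol_sub_mul_sub {x w u v δ : ℝ} (hu : |u - w| ≤ δ) (hv : |v - w| ≤ δ) :
    (w * steinSol x w + (if w ≤ x - δ then 1 else 0) - Φ x - (2 * |w| + 3) * δ) * (u - v) ^ 2 ≤
      (steinSol x u - steinSol x v) * (u - v) := by
  wlog hvu : v ≤ u generalizing u v
  · convert this hv hu (le_of_not_ge hvu) using 1 <;> ring
  rw [pow_two, ← mul_assoc]
  refine mul_le_mul_of_nonneg_right ?_ (sub_nonneg.mpr hvu)
  refine mul_sub_le_sub_of_le_right_deriv hvu (continuous_steinSol x).continuousOn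
    (fun t _ => hasDerivWithinAt_steinSol x t) fun t ht => le_steinSolDeriv ?_ ?_
  · rw [abs_le] at hu hv ⊢
    constructor <;> linarith [ht.1, ht.2]
  · linarith [ht.2, (abs_le.mp hu).2]

end Stein

section UniformMeasure

variable {Ω : Type*} [Fintype Ω]

/-- The probability of the event `p` under the uniform measure on a finite type. -/
noncomputable def uniformProb (p : Ω → Prop) : ℝ :=
  𝔼 ω, if p ω then 1 else 0

/-- The variance of `g` under the uniform measure on a finite type. -/
noncomputable def uniformVar (g : Ω → ℝ) : ℝ :=
  𝔼 ω, (g ω - 𝔼 τ, g τ) ^ 2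

/-- The standardization `(g - E g) / sd g` of `g` under the uniform measure on a finite type;
it vanishes identically if the variance of `g` is zero. -/
noncomputable def standardize (g : Ω → ℝ) (ω : Ω) : ℝ :=
  (g ω - 𝔼 τ, g τ) / √(uniformVar g)

lemma expect_ite_one_zero (p : Ω → Prop) [DecidablePred p] :
    𝔼 ω, (if p ω then (1 : ℝ) else 0) = uniformProb p :=
  Finset.expect_congr rfl fun _ _ => by congr

lemma uniformProb_nonneg (p : Ω → Prop) : 0 ≤ uniformProb p :=
  expect_nonneg fun _ _ => by positivity

lemma uniformProb_mono {p r : Ω → Prop} (h : ∀ ω, p ω → r ω) : uniformProb p ≤ uniformProb r :=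
  expect_le_expect fun ω _ => by
    by_cases hp : p ω
    · rw [if_pos hp, if_pos (h ω hp)]
    · rw [if_neg hp]
      positivity

lemma uniformProb_not [Nonempty Ω] (p : Ω → Prop) :
    uniformProb (fun ω => ¬ p ω) = 1 - uniformProb p := by
  rw [eq_sub_iff_add_eq, uniformProb, uniformProb, ← expect_add_distrib]
  refine (expect_congr rfl fun ω _ => ?_).trans (Fintype.expect_const (1 : ℝ))
  by_cases hp : p ω <;> simp [hp]

lemma uniformProb_le_one [Nonempty Ω] (p : Ω → Prop) : uniformProb p ≤ 1 := by
  linarith [uniformProb_not p, uniformProb_nonneg fun ω => ¬ p ω]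

lemma uniformProb_comp_equiv (e : Ω ≃ Ω) (p : Ω → Prop) :
    uniformProb (fun ω => p (e ω)) = uniformProb p :=
  Fintype.expect_equiv e _ _ fun _ => rfl

lemma uniformProb_le_expect_div {g : Ω → ℝ} (hg : ∀ ω, 0 ≤ g ω) {c : ℝ} (hc : 0 < c) :
    uniformProb (fun ω => c ≤ g ω) ≤ (𝔼 ω, g ω) / c := by
  rw [expect_div]
  refine expect_le_expect fun ω _ => ?_
  split_ifs with h
  · exact (one_le_div hc).mpr h
  · exact div_nonneg (hg ω) hc.le

lemma uniformVar_nonneg (g : Ω → ℝ) : 0 ≤ uniformVar g :=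
  expect_nonneg fun _ _ => sq_nonneg _

variable {g : Ω → ℝ}

lemma expect_sub_mul_self : 𝔼 ω, (g ω - 𝔼 τ, g τ) * g ω = uniformVar g := by
  rcases isEmpty_or_nonempty Ω with hΩ | hΩ
  · simp [uniformVar]
  have centered : 𝔼 ω, (g ω - 𝔼 τ, g τ) * 𝔼 τ, g τ = 0 := by
    rw [← expect_mul, expect_sub_distrib, Fintype.expect_const, sub_self, zero_mul]
  rw [← sub_zero (𝔼 ω, _), ← centered, ← expect_sub_distrib, uniformVar]
  exact expect_congr rfl fun ω _ => by ring

lemma expect_standardize_sq (hg : 0 < uniformVar g) : 𝔼 ω, standardize g ω ^ 2 = 1 := by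
  simp only [standardize, div_pow, Real.sq_sqrt hg.le, ← expect_div]
  exact div_self hg.ne'

lemma expect_abs_standardize_le_one (hg : 0 < uniformVar g) : 𝔼 ω, |standardize g ω| ≤ 1 := by
  have hΩ : Nonempty Ω := by
    by_contra hΩ
    rw [not_nonempty_iff] at hΩ
    simp [uniformVar] at hg
  calc 𝔼 ω, |standardize g ω| ≤ 𝔼 ω, (1 + standardize g ω ^ 2) / 2 :=
        expect_le_expect fun ω _ => by
          linarith [sq_abs (standardize g ω), sq_nonneg (|standardize g ω| - 1)]
    _ = 1 := by
        rw [← expect_div, expect_add_distrib, Fintype.expect_const, expect_standardize_sq hg]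
        norm_num

end UniformMeasure

section HammingDist

open Equiv

variable {α : Type*} [Fintype α] [DecidableEq α]

lemma hammingDist_swap_mul_le (π : Perm α) (x y : α) :
    hammingDist ⇑(swap x y * π) ⇑π ≤ 2 := by
  have moved : ({i | (swap x y * π) i ≠ π i} : Finset α) ⊆ {π.symm x, π.symm y} := by
    intro i hi
    rw [mem_filter_univ, Perm.mul_apply] at hi
    simp only [mem_insert, mem_singleton, eq_symm_apply]
    by_contra! h
    exact hi (swap_apply_of_ne_of_ne h.1 h.2)
  exact (card_le_card moved).trans card_le_two

lemma hammingDist_mul_swap_le (π : Perm α) (x y : α) :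
    hammingDist ⇑(π * swap x y) ⇑π ≤ 2 :=
  mul_swap_eq_swap_mul π x y ▸ hammingDist_swap_mul_le π (π x) (π y)

end HammingDist

section CombinatorialCLT

open Equiv

variable {α β : Type*}

/-- Hoeffding's combinatorial statistic `∑ i, a i (π i)` of a square array `a`. -/
noncomputable def permSum [Fintype α] (a : α → α → ℝ) (π : Perm α) : ℝ :=
  ∑ i, a i (π i)

/-- The amount by which `permSum a π` exceeds `permSum a (π * swap i j)` if `π` maps `i` to `k`
and `j` to `l`. -/
def swapDiff (a : α → β → ℝ) (i j : α) (k l : β) : ℝ :=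
  a i k + a j l - a i l - a j k

section SwapDiff

variable (a : α → β → ℝ)

lemma swapDiff_self_left (i : α) (k l : β) : swapDiff a i i k l = 0 := by
  rw [swapDiff]; ring

lemma swapDiff_self_right (i j : α) (k : β) : swapDiff a i j k k = 0 := by
  rw [swapDiff]; ring

lemma swapDiff_comm_right (i j : α) (k l : β) : swapDiff a i j l k = -swapDiff a i j k l := by
  rw [swapDiff, swapDiff]; ring

end SwapDiff

/-- The permutation obtained from `π` by exchanging two values so that `i` is mapped to `k`. -/
def redirect [DecidableEq α] (i k : α) (π : Perm α) : Perm α :=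
  swap (π i) k * π

section Redirect

variable [DecidableEq α] (i j k l : α) (π : Perm α)

lemma redirect_apply_self : redirect i k π i = k := by
  rw [redirect, Perm.mul_apply, swap_apply_left]

lemma redirect_redirect_self : redirect i (π i) (redirect i k π) = π := by
  rw [redirect, redirect_apply_self, redirect, swap_comm, swap_mul_self_mul]

lemma redirect_apply_of_ne {i j k : α} (π : Perm α) (hij : i ≠ j) (hk : π i ≠ k) :
    redirect j k π i = π i := by
  rw [redirect, Perm.mul_apply, swap_apply_of_ne_of_ne (π.injective.ne hij) hk]

lemma redirect_apply_image : redirect j (π i) π i = π j := by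
  rw [redirect, Perm.mul_apply, swap_apply_right]

variable [Fintype α]

lemma hammingDist_redirect_le : hammingDist ⇑(redirect i k π) ⇑π ≤ 2 :=
  hammingDist_swap_mul_le π (π i) k

lemma hammingDist_redirect_redirect_le :
    hammingDist ⇑(redirect j l (redirect i k π)) ⇑π ≤ 4 :=
  (hammingDist_triangle _ ⇑(redirect i k π) _).trans
    (add_le_add (hammingDist_redirect_le j l _) (hammingDist_redirect_le i k π))

lemma hammingDist_redirect_redirect_mul_swap_le :
    hammingDist ⇑(redirect j l (redirect i k π) * swap i j) ⇑π ≤ 6 :=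
  (hammingDist_triangle _ ⇑(redirect j l (redirect i k π)) _).trans
    (add_le_add (hammingDist_mul_swap_le _ i j) (hammingDist_redirect_redirect_le i j k l π))

lemma sum_expect_redirect (G : α → α → Perm α → ℝ) :
    ∑ k, 𝔼 π : Perm α, G k (π i) (redirect i k π) = ∑ k, 𝔼 π : Perm α, G (π i) k π := by
  have involutive : Function.Involutive
      fun p : α × Perm α => (p.2 i, redirect i p.1 p.2) := fun p =>
    Prod.ext (redirect_apply_self i p.1 p.2) (redirect_redirect_self i p.1 p.2)
  have reindex := Equiv.sum_comp involutive.toPerm fun p : α × Perm α => G (p.2 i) p.1 p.2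
  simp only [Function.Involutive.coe_toPerm, Fintype.sum_prod_type, redirect_apply_self] at reindex
  simp only [Fintype.expect_eq_sum_div_card, ← sum_div, reindex]

/-- Redirecting a uniform permutation to `i ↦ k` and `j ↦ l`, for uniformly chosen `k ≠ l`,
gives a uniform permutation again. -/
lemma sum_mul_expect_redirect_redirect {i j : α} (hij : i ≠ j) {β : α → α → ℝ}
    (hβ : ∀ k, β k k = 0) (H : Perm α → ℝ) :
    ∑ k, ∑ l, β k l * 𝔼 π, H (redirect j l (redirect i k π)) =
      Fintype.card α * (Fintype.card α - 1) * 𝔼 ρ : Perm α, β (ρ i) (ρ j) * H ρ := by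
  have first : ∑ k, ∑ l, β k l * 𝔼 π, H (redirect j l (redirect i k π)) =
      Fintype.card α * ∑ l, 𝔼 π : Perm α, β (π i) l * H (redirect j l π) := by
    have h := sum_expect_redirect i fun k _ π => ∑ l, β k l * H (redirect j l π)
    simp only [sum_const, card_univ, nsmul_eq_mul, expect_sum_comm] at h
    rw [← h]
    simp only [mul_expect]
  have second : ∑ l, 𝔼 π : Perm α, β (π i) l * H (redirect j l π) =
      ∑ m, 𝔼 ρ : Perm α, β (redirect j m ρ i) (ρ j) * H ρ := by
    rw [← sum_expect_redirect j fun l m ρ => β (redirect j m ρ i) l * H ρ]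
    simp only [redirect_redirect_self]
  have collapse (ρ : Perm α) : ∑ m, β (redirect j m ρ i) (ρ j) * H ρ =
      (Fintype.card α - 1) * (β (ρ i) (ρ j) * H ρ) := by
    rw [← sum_erase univ (a := ρ i) (by rw [redirect_apply_image, hβ, zero_mul]),
      sum_congr rfl fun m hm => by rw [redirect_apply_of_ne ρ hij (ne_of_mem_erase hm).symm],
      sum_const, card_erase_of_mem (mem_univ _), card_univ, nsmul_eq_mul,
      Nat.cast_pred (Fintype.card_pos_iff.mpr ⟨i⟩)]
  rw [first, second, ← expect_sum_comm]
  simp only [collapse, ← mul_expect, mul_assoc]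

end Redirect

section PermSum

variable [Fintype α] (a : α → α → ℝ)

lemma sum_swapDiff_perm (π : Perm α) :
    ∑ i, ∑ j, swapDiff a i j (π i) (π j) =
      2 * Fintype.card α * permSum a π - 2 * ∑ i, ∑ j, a i j := by
  have permute (i : α) : ∑ j, a i (π j) = ∑ j, a i j := Equiv.sum_comp π (a i)
  have permute' : ∑ i, ∑ j, a j (π i) = ∑ i, ∑ j, a i j := by
    rw [sum_comm]
    exact sum_congr rfl fun i _ => permute i
  simp only [swapDiff, permSum, sum_sub_distrib, sum_add_distrib, permute, permute', sum_const,
    card_univ, nsmul_eq_mul, ← mul_sum]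
  ring

variable [DecidableEq α]

lemma permSum_sub_permSum_mul_swap (π : Perm α) (i j : α) :
    permSum a π - permSum a (π * swap i j) = swapDiff a i j (π i) (π j) := by
  rcases eq_or_ne i j with rfl | hij
  · rw [swapDiff_self_left, swap_self, ← Perm.one_def, mul_one, sub_self]
  rw [permSum, permSum, ← sum_sub_distrib, ← sum_subset (subset_univ {i, j}), sum_pair hij]
  · simp only [Perm.mul_apply, swap_apply_left, swap_apply_right, swapDiff]
    ring
  · intro x _ hx
    simp only [mem_insert, mem_singleton, not_or] at hx
    rw [Perm.mul_apply, swap_apply_of_ne_of_ne hx.1 hx.2, sub_self]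

lemma permSum_redirect_redirect_sub (i j k l : α) (hij : i ≠ j) (hkl : k ≠ l) (π : Perm α) :
    permSum a (redirect j l (redirect i k π)) -
      permSum a (redirect j l (redirect i k π) * swap i j) = swapDiff a i j k l := by
  have image_i : redirect j l (redirect i k π) i = k := by
    have hk := redirect_apply_self i k π
    rw [redirect_apply_of_ne _ hij (hk.trans_ne hkl), hk]
  rw [permSum_sub_permSum_mul_swap, image_i, redirect_apply_self]

lemma abs_permSum_sub_le {a : α → α → ℝ} {A : ℝ} (hA : ∀ i k l, |a i k - a i l| ≤ A)
    (π ρ : Perm α) : |permSum a π - permSum a ρ| ≤ A * hammingDist ⇑π ⇑ρ := by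
  rw [permSum, permSum, ← sum_sub_distrib, hammingDist, card_filter, Nat.cast_sum, mul_sum]
  refine (abs_sum_le_sum_abs _ _).trans (sum_le_sum fun i _ => ?_)
  split_ifs with h
  · rw [Nat.cast_one, mul_one]
    exact hA i _ _
  · rw [not_not.mp h, sub_self, abs_zero, Nat.cast_zero, mul_zero]

lemma abs_permSum_sub_le_of_hammingDist_le [Nonempty α] {a : α → α → ℝ} {A : ℝ}
    (hA : ∀ i k l, |a i k - a i l| ≤ A) {π ρ : Perm α} {m : ℕ} (h : hammingDist ⇑π ⇑ρ ≤ m) :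
    |permSum a π - permSum a ρ| ≤ m * A := by
  inhabit α
  have hA_nonneg : 0 ≤ A := (abs_nonneg _).trans (hA default default default)
  refine (abs_permSum_sub_le hA π ρ).trans ?_
  rw [mul_comm]
  gcongr

lemma two_mul_expect_swapDiff_mul (i j : α) (f : Perm α → ℝ) :
    2 * 𝔼 π : Perm α, swapDiff a i j (π i) (π j) * f π =
      𝔼 π : Perm α, swapDiff a i j (π i) (π j) * (f π - f (π * swap i j)) := by
  have antisymm : 𝔼 π : Perm α, swapDiff a i j (π i) (π j) * f (π * swap i j) =
      -𝔼 π : Perm α, swapDiff a i j (π i) (π j) * f π := by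
    rw [← expect_neg_distrib]
    refine Fintype.expect_equiv (Equiv.mulRight (swap i j)) _ _ fun π => ?_
    rw [coe_mulRight, Perm.mul_apply, Perm.mul_apply, swap_apply_left, swap_apply_right,
      swapDiff_comm_right, neg_mul]
  simp only [mul_sub, expect_sub_distrib, antisymm]
  ring

lemma card_mul_expect_permSum :
    Fintype.card α * 𝔼 π, permSum a π = ∑ i, ∑ j, a i j := by
  have vanish (i j : α) : 𝔼 π : Perm α, swapDiff a i j (π i) (π j) = 0 := by
    have := two_mul_expect_swapDiff_mul a i j 1
    simpa using this
  have total : 𝔼 π : Perm α, ∑ i, ∑ j, swapDiff a i j (π i) (π j) = 0 := by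
    simp only [expect_sum_comm, vanish, sum_const_zero]
  simp only [sum_swapDiff_perm, expect_sub_distrib, ← mul_expect, Fintype.expect_const] at total
  linarith

/-- The exchangeable-pair (zero-bias) identity behind Stein's method for `permSum`. -/
lemma expect_permSum_sub_mul (f : Perm α → ℝ) :
    4 * (Fintype.card α : ℝ) ^ 2 * (Fintype.card α - 1) *
        𝔼 π, (permSum a π - 𝔼 ρ, permSum a ρ) * f π =
      ∑ i, ∑ j, ∑ k, ∑ l, swapDiff a i j k l * 𝔼 π, (f (redirect j l (redirect i k π)) -
        f (redirect j l (redirect i k π) * swap i j)) := by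
  have inner (i j : α) : ∑ k, ∑ l, swapDiff a i j k l * 𝔼 π,
        (f (redirect j l (redirect i k π)) - f (redirect j l (redirect i k π) * swap i j)) =
      Fintype.card α * (Fintype.card α - 1) *
        (2 * 𝔼 π : Perm α, swapDiff a i j (π i) (π j) * f π) := by
    rcases eq_or_ne i j with rfl | hij
    · simp [swapDiff_self_left]
    · rw [sum_mul_expect_redirect_redirect hij (swapDiff_self_right a i j)
        fun π => f π - f (π * swap i j), two_mul_expect_swapDiff_mul]
  have outer : ∑ i, ∑ j, 𝔼 π : Perm α, swapDiff a i j (π i) (π j) * f π =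
      2 * Fintype.card α * 𝔼 π, (permSum a π - 𝔼 ρ, permSum a ρ) * f π := by
    rw [mul_expect]
    simp only [← expect_sum_comm, ← sum_mul, sum_swapDiff_perm, ← card_mul_expect_permSum]
    exact expect_congr rfl fun π _ => by ring
  simp only [inner, ← mul_sum, outer]
  ring

lemma uniformVar_permSum :
    4 * (Fintype.card α : ℝ) ^ 2 * (Fintype.card α - 1) * uniformVar (permSum a) =
      ∑ i, ∑ j, ∑ k, ∑ l, swapDiff a i j k l ^ 2 := by
  rw [← expect_sub_mul_self, expect_permSum_sub_mul]
  refine sum_congr rfl fun i _ => sum_congr rfl fun j _ => sum_congr rfl fun k _ =>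
    sum_congr rfl fun l _ => ?_
  rcases eq_or_ne i j with rfl | hij
  · simp [swapDiff_self_left]
  rcases eq_or_ne k l with rfl | hkl
  · simp [swapDiff_self_right]
  simp only [permSum_redirect_redirect_sub a i j k l hij hkl, Fintype.expect_const, pow_two]

end PermSum

section SteinBound

variable [Fintype α] [DecidableEq α] {a : α → α → ℝ} {A : ℝ}

lemma expect_permSum_sub_mul_comp_le [Nontrivial α] (hA : ∀ i k l, |a i k - a i l| ≤ A)
    {f : ℝ → ℝ} {U : Perm α → ℝ}
    (slope_le : ∀ π u v, |u - permSum a π| ≤ 6 * A → |v - permSum a π| ≤ 6 * A →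
      (f u - f v) * (u - v) ≤ U π * (u - v) ^ 2) :
    𝔼 π, (permSum a π - 𝔼 ρ, permSum a ρ) * f (permSum a π) ≤
      uniformVar (permSum a) * 𝔼 π, U π := by
  have card_gt_one : (1 : ℝ) < Fintype.card α := by exact_mod_cast Fintype.one_lt_card
  have factor_pos : 0 < 4 * (Fintype.card α : ℝ) ^ 2 * (Fintype.card α - 1) := by
    have := sub_pos.mpr card_gt_one
    positivity
  refine le_of_mul_le_mul_left ?_ factor_pos
  rw [expect_permSum_sub_mul a fun π => f (permSum a π), ← mul_assoc, uniformVar_permSum]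
  simp only [sum_mul]
  refine sum_le_sum fun i _ => sum_le_sum fun j _ => sum_le_sum fun k _ => sum_le_sum fun l _ => ?_
  rw [mul_expect, mul_expect]
  refine expect_le_expect fun π _ => ?_
  rcases eq_or_ne i j with rfl | hij
  · simp [swapDiff_self_left]
  rcases eq_or_ne k l with rfl | hkl
  · simp [swapDiff_self_right]
  have close : |permSum a (redirect j l (redirect i k π)) - permSum a π| ≤ 6 * A :=
    abs_permSum_sub_le_of_hammingDist_le hA
      ((hammingDist_redirect_redirect_le i j k l π).trans (by norm_num))
  have close' : |permSum a (redirect j l (redirect i k π) * swap i j) - permSum a π| ≤ 6 * A :=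
    abs_permSum_sub_le_of_hammingDist_le hA
      (hammingDist_redirect_redirect_mul_swap_le i j k l π)
  have := slope_le π _ _ close close'
  rwa [permSum_redirect_redirect_sub a i j k l hij hkl, mul_comm, mul_comm (U π)] at this

lemma nontrivial_of_uniformVar_permSum_pos (hvar : 0 < uniformVar (permSum a)) : Nontrivial α := by
  by_contra h
  have := not_nontrivial_iff_subsingleton.mp h
  have constant (π : Perm α) : permSum a π = permSum a 1 := by rw [Subsingleton.elim π 1]
  simp [uniformVar, constant] at hvar

lemma expect_standardize_mul_comp_le (hA : ∀ i k l, |a i k - a i l| ≤ A)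
    (hvar : 0 < uniformVar (permSum a)) {δ : ℝ} (hδ : δ = 6 * A / √(uniformVar (permSum a)))
    {f : ℝ → ℝ} {U : Perm α → ℝ}
    (slope_le : ∀ π u v, |u - standardize (permSum a) π| ≤ δ →
      |v - standardize (permSum a) π| ≤ δ → (f u - f v) * (u - v) ≤ U π * (u - v) ^ 2) :
    𝔼 π, standardize (permSum a) π * f (standardize (permSum a) π) ≤ 𝔼 π, U π := by
  have := nontrivial_of_uniformVar_permSum_pos hvar
  set s := √(uniformVar (permSum a))
  set μ := 𝔼 ρ, permSum a ρ
  have s_pos : 0 < s := Real.sqrt_pos.mpr hvar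
  have rescale (u v : ℝ) : (u - μ) / s - (v - μ) / s = (u - v) / s := by ring
  have close_of {π : Perm α} {u : ℝ} (hu : |u - permSum a π| ≤ 6 * A) :
      |(u - μ) / s - standardize (permSum a) π| ≤ δ := by
    rw [standardize, rescale, abs_div, abs_of_pos s_pos, hδ]
    gcongr
  have unscaled := expect_permSum_sub_mul_comp_le hA (f := fun y => f ((y - μ) / s))
    (U := fun π => U π / s) fun π u v hu hv => by
      have scaled := slope_le π _ _ (close_of hu) (close_of hv)
      rw [rescale] at scaled
      calc _ = s * ((f ((u - μ) / s) - f ((v - μ) / s)) * ((u - v) / s)) := by field_simp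
        _ ≤ s * (U π * ((u - v) / s) ^ 2) := mul_le_mul_of_nonneg_left scaled s_pos.le
        _ = U π / s * (u - v) ^ 2 := by field_simp
  have var_eq : uniformVar (permSum a) = s * s := (Real.mul_self_sqrt hvar.le).symm
  rw [← expect_div, var_eq, mul_assoc, mul_div_cancel₀ _ s_pos.ne', mul_comm s,
    ← div_le_iff₀ s_pos, expect_div] at unscaled
  refine unscaled.trans_eq' (expect_congr rfl fun π _ => ?_)
  rw [mul_div_right_comm]
  rfl

lemma stdNormalCDF_le_uniformProb_standardize_add (hA : ∀ i k l, |a i k - a i l| ≤ A)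
    (hvar : 0 < uniformVar (permSum a)) {δ : ℝ} (hδ : δ = 6 * A / √(uniformVar (permSum a)))
    (hδ_nonneg : 0 ≤ δ) (x : ℝ) :
    stdNormalCDF x ≤ uniformProb (fun π => standardize (permSum a) π ≤ x + δ) + 5 * δ := by
  have stein := expect_standardize_mul_comp_le hA hvar hδ (f := steinSol x)
    fun π u v hu hv => steinSol_sub_mul_sub_le hu hv
  simp only [expect_add_distrib, expect_sub_distrib, expect_ite_one_zero, ← expect_mul,
    ← mul_expect, Fintype.expect_const] at stein
  have := mul_le_mul_of_nonneg_right (expect_abs_standardize_le_one hvar) hδ_nonneg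
  linarith

lemma uniformProb_standardize_le (hA : ∀ i k l, |a i k - a i l| ≤ A)
    (hvar : 0 < uniformVar (permSum a)) {δ : ℝ} (hδ : δ = 6 * A / √(uniformVar (permSum a)))
    (hδ_nonneg : 0 ≤ δ) (x : ℝ) :
    uniformProb (fun π => standardize (permSum a) π ≤ x - δ) ≤ stdNormalCDF x + 5 * δ := by
  have stein := expect_standardize_mul_comp_le hA hvar hδ (f := fun w => -steinSol x w)
    (U := fun π => -(standardize (permSum a) π * steinSol x (standardize (permSum a) π) +
      (if standardize (permSum a) π ≤ x - δ then 1 else 0) - stdNormalCDF x -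
      (2 * |standardize (permSum a) π| + 3) * δ))
    fun π u v hu hv => by linarith [le_steinSol_sub_mul_sub (x := x) hu hv]
  simp only [mul_neg, expect_neg_distrib, expect_add_distrib, expect_sub_distrib,
    expect_ite_one_zero, ← expect_mul, ← mul_expect, Fintype.expect_const] at stein
  have := mul_le_mul_of_nonneg_right (expect_abs_standardize_le_one hvar) hδ_nonneg
  linarith

theorem abs_uniformProb_standardize_permSum_sub_le (hA : ∀ i k l, |a i k - a i l| ≤ A)
    (hvar : 0 < uniformVar (permSum a)) (x : ℝ) :
    |uniformProb (fun π => standardize (permSum a) π ≤ x) - stdNormalCDF x| ≤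
      36 * A / √(uniformVar (permSum a)) := by
  have := nontrivial_of_uniformVar_permSum_pos hvar
  set δ := 6 * A / √(uniformVar (permSum a)) with hδ
  have δ_nonneg : 0 ≤ δ := by
    inhabit α
    have := (abs_nonneg _).trans (hA default default default)
    positivity
  have upper := uniformProb_standardize_le hA hvar hδ δ_nonneg (x + δ)
  have lower := stdNormalCDF_le_uniformProb_standardize_add hA hvar hδ δ_nonneg (x - δ)
  rw [add_sub_cancel_right] at upper
  rw [sub_add_cancel] at lower
  refine (abs_sub_stdNormalCDF_le_of_shift δ_nonneg upper (by linarith)).trans_eq ?_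
  rw [hδ]
  ring

end SteinBound

end CombinatorialCLT

section CycleCount

open Equiv

variable {α : Type*}

/-- The number of cycles of a permutation, fixed points included. -/
noncomputable def cycleCount (c : Perm α) : ℕ :=
  Nat.card (Quotient (Perm.SameCycle.setoid c))

lemma mk_sameCycle_eq_iff {c : Perm α} {x y : α} :
    Quotient.mk (Perm.SameCycle.setoid c) x = Quotient.mk (Perm.SameCycle.setoid c) y ↔
      c.SameCycle x y :=
  Quotient.eq (r := Perm.SameCycle.setoid c)

lemma cycleCount_mul_self_le [Finite α] (c : Perm α) : cycleCount (c * c) ≤ 2 * cycleCount c := by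
  let representative (p : Bool × Quotient (Perm.SameCycle.setoid c)) :
      Quotient (Perm.SameCycle.setoid (c * c)) :=
    Quotient.mk _ (if p.1 then c p.2.out else p.2.out)
  suffices surjective : Function.Surjective representative by
    simpa [cycleCount] using Nat.card_le_card_of_surjective _ surjective
  rintro ⟨y⟩
  obtain ⟨k, hk⟩ := mk_sameCycle_eq_iff.mp
    (Quotient.out_eq (Quotient.mk (Perm.SameCycle.setoid c) y))
  rcases Int.even_or_odd' k with ⟨j, rfl | rfl⟩
  · refine ⟨(false, Quotient.mk _ y), mk_sameCycle_eq_iff.mpr ⟨j, ?_⟩⟩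
    rwa [← pow_two, ← zpow_natCast, ← zpow_mul]
  · refine ⟨(true, Quotient.mk _ y), mk_sameCycle_eq_iff.mpr ⟨j, ?_⟩⟩
    rw [zpow_add, zpow_one, Perm.mul_apply] at hk
    rwa [← pow_two, ← zpow_natCast, ← zpow_mul]

lemma isConj_of_isCycleOn_univ [Finite α] {c d : Perm α} (hc : c.IsCycleOn Set.univ)
    (hd : d.IsCycleOn Set.univ) : IsConj c d := by
  rcases subsingleton_or_nontrivial α with hα | hα
  · rw [Subsingleton.elim c d]
  have := Fintype.ofFinite α
  inhabit α
  have moves {f : Perm α} (hf : f.IsCycleOn Set.univ) (x : α) : f x ≠ x :=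
    hf.apply_ne Set.nontrivial_univ (Set.mem_univ x)
  have isCycle {f : Perm α} (hf : f.IsCycleOn Set.univ) : f.IsCycle :=
    ⟨default, moves hf _, fun y _ => hf.2 (Set.mem_univ _) (Set.mem_univ y)⟩
  have support_eq {f : Perm α} (hf : f.IsCycleOn Set.univ) : f.support = univ :=
    eq_univ_of_forall fun x => Perm.mem_support.mpr (moves hf x)
  exact (isCycle hc).isConj (isCycle hd) (by rw [support_eq hc, support_eq hd])

section Merge

variable [Finite α] {c : Perm α} {i j x y : α}

lemma sameCycle_of_forall_sameCycle_apply {d : Perm α} (h : ∀ x, d.SameCycle x (c x))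
    (hxy : c.SameCycle x y) : d.SameCycle x y := by
  obtain ⟨m, -, -, rfl⟩ := hxy.exists_pow_eq''
  induction m with
  | zero => exact Perm.SameCycle.refl d x
  | succ m ih =>
    rw [pow_succ', Perm.mul_apply]
    exact (ih (Perm.SameCycle.refl c x).pow_right).trans (h _)

variable [DecidableEq α]

lemma sameCycle_mul_swap (hij : ¬ c.SameCycle i j) : (c * swap i j).SameCycle i j := by
  have apply_i : (c * swap i j) i = c j := by rw [Perm.mul_apply, swap_apply_left]
  have orbit_j (m : ℕ) : (c * swap i j).SameCycle i ((c ^ (m + 1)) j) := by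
    induction m with
    | zero =>
      rw [zero_add, pow_one, ← apply_i]
      exact (Perm.SameCycle.refl _ i).apply_right
    | succ m ih =>
      rw [pow_succ', Perm.mul_apply]
      have ne_i : (c ^ (m + 1)) j ≠ i := fun h =>
        hij (h ▸ (Perm.SameCycle.refl c j).pow_left)
      rcases eq_or_ne ((c ^ (m + 1)) j) j with eq_j | ne_j
      · rw [eq_j, ← apply_i]
        exact (Perm.SameCycle.refl _ i).apply_right
      · rw [← swap_apply_of_ne_of_ne ne_i ne_j, ← Perm.mul_apply]
        exact ih.apply_right
  have := orbit_j (orderOf c - 1)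
  rwa [Nat.sub_add_cancel (orderOf_pos c), pow_orderOf_eq_one] at this

lemma sameCycle_mul_swap_of_sameCycle (hij : ¬ c.SameCycle i j) (hxy : c.SameCycle x y) :
    (c * swap i j).SameCycle x y := by
  refine sameCycle_of_forall_sameCycle_apply (fun z => ?_) hxy
  have merged := sameCycle_mul_swap hij
  have apply_swap : c z = (c * swap i j) (swap i j z) := by
    rw [Perm.mul_apply, swap_apply_self]
  rw [apply_swap, Perm.sameCycle_apply_right]
  rcases eq_or_ne z i with rfl | ne_i
  · rwa [swap_apply_left]
  rcases eq_or_ne z j with rfl | ne_j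
  · rwa [swap_apply_right, Perm.sameCycle_comm]
  · rw [swap_apply_of_ne_of_ne ne_i ne_j]

lemma cycleCount_mul_swap_lt (hij : ¬ c.SameCycle i j) :
    cycleCount (c * swap i j) < cycleCount c := by
  let coarsen : Quotient (Perm.SameCycle.setoid c) →
      Quotient (Perm.SameCycle.setoid (c * swap i j)) :=
    Quotient.map' id fun _ _ => sameCycle_mul_swap_of_sameCycle hij
  have surjective : Function.Surjective coarsen := by
    rintro ⟨y⟩
    exact ⟨Quotient.mk _ y, rfl⟩
  have not_injective : ¬ Function.Injective coarsen := fun injective =>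
    hij (mk_sameCycle_eq_iff.mp (injective (mk_sameCycle_eq_iff.mpr (sameCycle_mul_swap hij))))
  have := Fintype.ofFinite α
  simp only [cycleCount, Nat.card_eq_fintype_card]
  exact Fintype.card_lt_of_surjective_not_injective coarsen surjective not_injective

end Merge

variable [Fintype α] [DecidableEq α]

lemma hammingDist_conj (θ c d : Perm α) :
    hammingDist ⇑(θ * c * θ⁻¹) ⇑(θ * d * θ⁻¹) = hammingDist ⇑c ⇑d :=
  Finset.card_equiv θ⁻¹ fun x => by simp

lemma exists_isCycleOn_univ_hammingDist_le (c : Perm α) :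
    ∃ ζ : Perm α, ζ.IsCycleOn Set.univ ∧ hammingDist ⇑c ⇑ζ ≤ 2 * cycleCount c := by
  induction hk : cycleCount c using Nat.strong_induction_on generalizing c with
  | _ k ih =>
  by_cases full : ∀ i j, c.SameCycle i j
  · exact ⟨c, ⟨c.bijective.bijOn_univ, fun i _ j _ => full i j⟩, by simp⟩
  push Not at full
  obtain ⟨i, j, hij⟩ := full
  have fewer := cycleCount_mul_swap_lt hij
  obtain ⟨ζ, ζ_full, close⟩ := ih _ (hk ▸ fewer) (c * swap i j) rfl
  have swapped := hammingDist_mul_swap_le c i j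
  rw [hammingDist_comm] at swapped
  have := hammingDist_triangle ⇑c ⇑(c * swap i j) ⇑ζ
  exact ⟨ζ, ζ_full, by omega⟩

lemma exists_hammingDist_mul_self_conj_le (c d : Perm α) :
    ∃ θ : Perm α, hammingDist ⇑(c * c) ⇑(θ * d * θ⁻¹) ≤ 4 * cycleCount c + 2 * cycleCount d := by
  obtain ⟨ζ, ζ_full, close_ζ⟩ := exists_isCycleOn_univ_hammingDist_le (c * c)
  obtain ⟨ξ, ξ_full, close_ξ⟩ := exists_isCycleOn_univ_hammingDist_le d
  obtain ⟨θ, rfl⟩ := isConj_iff.mp (isConj_of_isCycleOn_univ ξ_full ζ_full)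
  refine ⟨θ, (hammingDist_triangle _ ⇑(θ * ξ * θ⁻¹) _).trans ?_⟩
  rw [hammingDist_conj, hammingDist_comm ⇑ξ]
  have := cycleCount_mul_self_le c
  omega

section Burnside

open scoped Pointwise

lemma two_pow_cycleCount_le_card_fixedBy (c : Perm α) :
    2 ^ cycleCount c ≤ Fintype.card (MulAction.fixedBy (Finset α) c) := by
  let unionOfCycles (F : Finset (Quotient (Perm.SameCycle.setoid c))) : Finset α :=
    {x | Quotient.mk _ x ∈ F}
  have fixed (F) : unionOfCycles F ∈ MulAction.fixedBy (Finset α) c := by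
    ext x
    have : Quotient.mk (Perm.SameCycle.setoid c) (c⁻¹ • x) = Quotient.mk _ x :=
      mk_sameCycle_eq_iff.mpr (by simpa using Perm.SameCycle.refl c x)
    rw [← inv_smul_mem_iff]
    simp only [unionOfCycles, mem_filter_univ, this]
  have injective : Function.Injective fun F =>
      (⟨unionOfCycles F, fixed F⟩ : MulAction.fixedBy (Finset α) c) := by
    intro F G h
    ext ω
    obtain ⟨x, rfl⟩ := Quotient.exists_rep ω
    simpa [unionOfCycles] using Finset.ext_iff.mp (Subtype.mk.inj h) x
  rw [cycleCount, Nat.card_eq_fintype_card, ← Fintype.card_finset]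
  exact Fintype.card_le_of_injective _ injective

lemma card_orbits_finset_le :
    Fintype.card (MulAction.orbitRel.Quotient (Perm α) (Finset α)) ≤ Fintype.card α + 1 := by
  let cardOfOrbit (ω : MulAction.orbitRel.Quotient (Perm α) (Finset α)) :
      Fin (Fintype.card α + 1) :=
    ⟨#(Quotient.out ω), Nat.lt_succ_of_le (card_le_univ _)⟩
  suffices injective : Function.Injective cardOfOrbit by
    simpa using Fintype.card_le_of_injective _ injective
  intro ω ω' h
  obtain ⟨g, hg⟩ := (Set.powersetCard.isPretransitive (α := α)).exists_smul_eq
    ⟨Quotient.out ω', rfl⟩ ⟨Quotient.out ω, Fin.mk.inj h⟩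
  rw [← Quotient.out_eq ω, ← Quotient.out_eq ω']
  exact Quotient.sound ⟨g, congrArg Subtype.val hg⟩

lemma expect_two_pow_cycleCount_le :
    𝔼 c : Perm α, (2 : ℝ) ^ cycleCount c ≤ Fintype.card α + 1 := by
  have burnside := MulAction.sum_card_fixedBy_eq_card_orbits_mul_card_group (Perm α) (Finset α)
  have bound : ∑ c : Perm α, 2 ^ cycleCount c ≤
      (Fintype.card α + 1) * Fintype.card (Perm α) :=
    calc ∑ c : Perm α, 2 ^ cycleCount c
        ≤ ∑ c : Perm α, Fintype.card (MulAction.fixedBy (Finset α) c) :=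
          sum_le_sum fun c _ => two_pow_cycleCount_le_card_fixedBy c
      _ ≤ (Fintype.card α + 1) * Fintype.card (Perm α) := by
          rw [burnside]
          gcongr
          exact card_orbits_finset_le
  rw [Fintype.expect_eq_sum_div_card, div_le_iff₀ (by positivity)]
  exact_mod_cast bound

end Burnside

lemma uniformProb_lt_cycleCount_le (m : ℕ) :
    uniformProb (fun c : Perm α => m < cycleCount c) ≤ (Fintype.card α + 1) / 2 ^ m :=
  calc uniformProb (fun c : Perm α => m < cycleCount c)
      ≤ uniformProb (fun c : Perm α => (2 : ℝ) ^ m ≤ 2 ^ cycleCount c) :=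
        uniformProb_mono fun c hc => pow_le_pow_right₀ one_le_two hc.le
    _ ≤ (𝔼 c : Perm α, (2 : ℝ) ^ cycleCount c) / 2 ^ m :=
        uniformProb_le_expect_div (fun _ => by positivity) (by positivity)
    _ ≤ (Fintype.card α + 1) / 2 ^ m := by
        gcongr
        exact expect_two_pow_cycleCount_le

end CycleCount

section Square

open Equiv

lemma expect_uniformProb_conj {G : Type*} [Group G] [Fintype G] (p : G → Prop) :
    𝔼 g, uniformProb (fun h => p (h * g * h⁻¹)) = uniformProb p := by
  simp only [uniformProb]
  rw [expect_comm]
  have conj_invariant (h : G) : 𝔼 g, (if p (h * g * h⁻¹) then (1 : ℝ) else 0) = uniformProb p :=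
    uniformProb_comp_equiv (MulAut.conj h).toEquiv p
  simp only [conj_invariant, Fintype.expect_const]
  rfl

variable {α : Type*} [Fintype α] [DecidableEq α] {m : ℕ}

section Transfer

variable {p r : Perm α → Prop}

lemma uniformProb_conj_mul_self_le
    (hpr : ∀ σ τ : Perm α, hammingDist ⇑σ ⇑τ ≤ 6 * m → p σ → r τ) {c d : Perm α}
    (hc : cycleCount c ≤ m) (hd : cycleCount d ≤ m) :
    uniformProb (fun π => p (π * (c * c) * π⁻¹)) ≤ uniformProb (fun π => r (π * d * π⁻¹)) := by
  obtain ⟨θ, close⟩ := exists_hammingDist_mul_self_conj_le c d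
  rw [← uniformProb_comp_equiv (Equiv.mulRight θ) fun π => r (π * d * π⁻¹)]
  refine uniformProb_mono fun π => hpr _ _ ?_
  rw [coe_mulRight, show π * θ * d * (π * θ)⁻¹ = π * (θ * d * θ⁻¹) * π⁻¹ by group,
    hammingDist_conj]
  omega

lemma uniformProb_mul_self_le
    (hpr : ∀ σ τ : Perm α, hammingDist ⇑σ ⇑τ ≤ 6 * m → p σ → r τ) :
    uniformProb (fun σ => p (σ * σ)) ≤
      uniformProb r + 2 * uniformProb (fun c : Perm α => m < cycleCount c) := by
  have pairwise (c d : Perm α) : uniformProb (fun π => p (π * (c * c) * π⁻¹)) ≤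
      uniformProb (fun π => r (π * d * π⁻¹)) +
        ((if m < cycleCount c then 1 else 0) + if m < cycleCount d then 1 else 0) := by
    by_cases few : cycleCount c ≤ m ∧ cycleCount d ≤ m
    · simpa only [few.1.not_gt, few.2.not_gt, if_false, add_zero] using
        uniformProb_conj_mul_self_le hpr few.1 few.2
    have many : (1 : ℝ) ≤ (if m < cycleCount c then 1 else 0) +
        if m < cycleCount d then 1 else 0 := by
      rw [not_and_or, not_le, not_le] at few
      rcases few with hc | hd
      · rw [if_pos hc]
        exact le_add_of_nonneg_right (by positivity)
      · rw [if_pos hd]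
        exact le_add_of_nonneg_left (by positivity)
    linarith [uniformProb_le_one fun π => p (π * (c * c) * π⁻¹),
      uniformProb_nonneg fun π => r (π * d * π⁻¹)]
  have square_conj (π c : Perm α) :
      π * (c * c) * π⁻¹ = (π * c * π⁻¹) * (π * c * π⁻¹) := by group
  have averaged := expect_le_expect fun c (_ : c ∈ univ) =>
    expect_le_expect fun d (_ : d ∈ univ) => pairwise c d
  simp only [expect_add_distrib, Fintype.expect_const, expect_ite_one_zero,
    expect_uniformProb_conj, square_conj, expect_uniformProb_conj fun σ => p (σ * σ)] at averaged
  linarith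

lemma uniformProb_le_mul_self
    (hpr : ∀ σ τ : Perm α, hammingDist ⇑σ ⇑τ ≤ 6 * m → p σ → r τ) :
    uniformProb p ≤ uniformProb (fun σ => r (σ * σ)) +
      2 * uniformProb (fun c : Perm α => m < cycleCount c) := by
  have complement := uniformProb_mul_self_le (p := fun σ => ¬ r σ) (r := fun σ => ¬ p σ)
    fun σ τ close => mt (hpr τ σ (hammingDist_comm ⇑σ ⇑τ ▸ close))
  rw [uniformProb_not fun σ => r (σ * σ), uniformProb_not] at complement
  linarith

end Transfer

theorem abs_uniformProb_standardize_permSum_mul_self_sub_le {a : α → α → ℝ} {A : ℝ}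
    (hA : ∀ i k l, |a i k - a i l| ≤ A) (hvar : 0 < uniformVar (permSum a)) (m : ℕ) (x : ℝ) :
    |uniformProb (fun σ => standardize (permSum a) (σ * σ) ≤ x) - stdNormalCDF x| ≤
      (6 * m + 36) * (A / √(uniformVar (permSum a))) +
        2 * uniformProb (fun c : Perm α => m < cycleCount c) := by
  have := nontrivial_of_uniformVar_permSum_pos hvar
  set δ := 6 * m * (A / √(uniformVar (permSum a))) with hδ
  have A_nonneg : 0 ≤ A := by
    inhabit α
    exact (abs_nonneg _).trans (hA default default default)
  have δ_nonneg : 0 ≤ δ := by positivity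
  have shift (y : ℝ) (σ τ : Perm α) (close : hammingDist ⇑σ ⇑τ ≤ 6 * m)
      (hσ : standardize (permSum a) σ ≤ y) : standardize (permSum a) τ ≤ y + δ := by
    have moved : permSum a τ - permSum a σ ≤ 6 * m * A := by
      rw [hammingDist_comm] at close
      exact_mod_cast (le_abs_self _).trans (abs_permSum_sub_le_of_hammingDist_le hA close)
    have : standardize (permSum a) τ - standardize (permSum a) σ ≤ δ := by
      rw [standardize, standardize, ← sub_div, sub_sub_sub_cancel_right, hδ, ← mul_div_assoc]
      gcongr
    linarith
  have clt (y : ℝ) := abs_le.mp (abs_uniformProb_standardize_permSum_sub_le hA hvar y)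
  have upper := uniformProb_mul_self_le (shift x)
  have lower := uniformProb_le_mul_self (shift (x - δ))
  simp only [sub_add_cancel] at lower
  refine (abs_sub_stdNormalCDF_le_of_shift δ_nonneg
    (η := 36 * A / √(uniformVar (permSum a)) +
      2 * uniformProb (fun c : Perm α => m < cycleCount c))
    (by linarith [(clt (x + δ)).2]) (by linarith [(clt (x - δ)).1])).trans_eq ?_
  rw [hδ]
  ring

end Square

section VarianceLowerBound

open Equiv

variable {α : Type*} [Fintype α]

lemma card_mul_le_sum {S : Finset α} {f : α → ℝ} {c : ℝ} (hf : ∀ i, 0 ≤ f i)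
    (hS : ∀ i ∈ S, c ≤ f i) : #S * c ≤ ∑ i, f i :=
  calc #S * c = #S • c := (nsmul_eq_mul _ _).symm
    _ ≤ ∑ i ∈ S, f i := card_nsmul_le_sum S f c hS
    _ ≤ ∑ i, f i := sum_le_univ_sum_of_nonneg hf

variable {a : α → α → ℝ} {S R : Finset α} {D : ℝ}

lemma sq_le_sum_swapDiff_sq (hD : 0 ≤ D)
    (h : ∀ i ∈ S, ∀ j ∈ R, ∀ k ∈ S, ∀ l ∈ R, D ≤ |swapDiff a i j k l|) :
    (#S * #R * D) ^ 2 ≤ ∑ i, ∑ j, ∑ k, ∑ l, swapDiff a i j k l ^ 2 :=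
  calc (#S * #R * D) ^ 2 = #S * (#R * (#S * (#R * D ^ 2))) := by ring
    _ ≤ ∑ i, ∑ j, ∑ k, ∑ l, swapDiff a i j k l ^ 2 :=
      card_mul_le_sum (fun _ => by positivity) fun i hi =>
      card_mul_le_sum (fun _ => by positivity) fun j hj =>
      card_mul_le_sum (fun _ => by positivity) fun k hk =>
      card_mul_le_sum (fun _ => by positivity) fun l hl => by
        rw [← sq_abs (swapDiff a i j k l)]
        exact pow_le_pow_left₀ hD (h i hi j hj k hk l hl) 2

lemma sq_le_card_pow_mul_uniformVar_permSum [DecidableEq α] (hD : 0 ≤ D)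
    (h : ∀ i ∈ S, ∀ j ∈ R, ∀ k ∈ S, ∀ l ∈ R, D ≤ |swapDiff a i j k l|) :
    (#S * #R * D) ^ 2 ≤ 4 * (Fintype.card α : ℝ) ^ 3 * uniformVar (permSum a) :=
  calc (#S * #R * D) ^ 2 ≤ 4 * (Fintype.card α : ℝ) ^ 2 * (Fintype.card α - 1) *
        uniformVar (permSum a) := (sq_le_sum_swapDiff_sq hD h).trans_eq (uniformVar_permSum a).symm
    _ ≤ 4 * (Fintype.card α : ℝ) ^ 2 * Fintype.card α * uniformVar (permSum a) := by
        gcongr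
        · exact uniformVar_nonneg _
        · exact sub_le_self _ zero_le_one
    _ = 4 * (Fintype.card α : ℝ) ^ 3 * uniformVar (permSum a) := by ring

end VarianceLowerBound

section Spearman

open Equiv

variable {q : ℝ} {n : ℕ}

/-- The array `|k - i| ^ q` whose permutation sums are Spearman's metric. -/
noncomputable def spearmanArray (q : ℝ) (n : ℕ) (i k : Fin n) : ℝ :=
  |((k : ℕ) : ℝ) - ((i : ℕ) : ℝ)| ^ q

lemma rhoq_eq_permSum : rhoq q (n := n) = permSum (spearmanArray q n) := rfl

lemma Pn_eq_uniformProb (p : Perm (Fin n) → Prop) : Pn p = uniformProb p := by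
  rw [Pn, uniformProb, Fintype.expect_eq_sum_div_card, sum_boole]

lemma En_eq_expect (g : Perm (Fin n) → ℝ) : En g = 𝔼 σ, g σ :=
  (Fintype.expect_eq_sum_div_card g).symm

lemma VarN_eq_uniformVar (g : Perm (Fin n) → ℝ) : VarN g = uniformVar g := by
  simp only [VarN, uniformVar, En_eq_expect]

lemma cast_val_rev (i : Fin n) : ((i.rev : ℕ) : ℝ) = n - i - 1 := by
  rw [Fin.val_rev, Nat.cast_sub i.isLt, Nat.cast_succ, sub_sub]

lemma spearmanArray_rev (i k : Fin n) :
    spearmanArray q n i.rev k.rev = spearmanArray q n i k := by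
  rw [spearmanArray, spearmanArray, cast_val_rev, cast_val_rev, abs_sub_comm]
  ring_nf

lemma spearmanArray_le (hq : 0 ≤ q) {t : ℝ} (ht : 0 ≤ t) {i k : Fin n}
    (h : |((k : ℕ) : ℝ) - ((i : ℕ) : ℝ)| ≤ n * t) :
    spearmanArray q n i k ≤ (n : ℝ) ^ q * t ^ q := by
  rw [← Real.mul_rpow n.cast_nonneg ht]
  exact Real.rpow_le_rpow (abs_nonneg _) h hq

lemma le_spearmanArray (hq : 0 ≤ q) {t : ℝ} (ht : 0 ≤ t) {i k : Fin n}
    (h : n * t ≤ |((k : ℕ) : ℝ) - ((i : ℕ) : ℝ)|) :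
    (n : ℝ) ^ q * t ^ q ≤ spearmanArray q n i k := by
  rw [← Real.mul_rpow n.cast_nonneg ht]
  exact Real.rpow_le_rpow (by positivity) h hq

lemma abs_spearmanArray_sub_le (hq : 0 ≤ q) (i k l : Fin n) :
    |spearmanArray q n i k - spearmanArray q n i l| ≤ (n : ℝ) ^ q := by
  have nonneg (k : Fin n) : 0 ≤ spearmanArray q n i k := Real.rpow_nonneg (abs_nonneg _) q
  have le (k : Fin n) : spearmanArray q n i k ≤ (n : ℝ) ^ q := by
    have := spearmanArray_le hq zero_le_one (i := i) (k := k) <| by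
      rw [mul_one]
      exact abs_sub_le_of_nonneg_of_le (Nat.cast_nonneg _) (by exact_mod_cast k.isLt.le)
        (Nat.cast_nonneg _) (by exact_mod_cast i.isLt.le)
    rwa [Real.one_rpow, mul_one] at this
  exact abs_sub_le_of_nonneg_of_le (nonneg k) (le k) (nonneg l) (le l)

/-- The indices in the lowest eighth of `0, …, n - 1`; their reflections under `Fin.rev` form the
highest eighth, which is far away from them. -/
def lowestEighth (n : ℕ) : Finset (Fin n) :=
  {i | 8 * (i : ℕ) ≤ n}

lemma cast_le_of_mem_lowestEighth {i : Fin n} (hi : i ∈ lowestEighth n) :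
    ((i : ℕ) : ℝ) ≤ n * (1 / 8) := by
  have : 8 * ((i : ℕ) : ℝ) ≤ n := by exact_mod_cast (mem_filter_univ i).mp hi
  linarith

lemma div_eight_le_card_lowestEighth : (n : ℝ) / 8 ≤ #(lowestEighth n) := by
  rcases n.eq_zero_or_pos with rfl | n_pos
  · simp
  have card_le : #(univ : Finset (Fin (n / 8 + 1))) ≤ #(lowestEighth n) :=
    card_le_card_of_injOn (Fin.castLE (by omega))
      (fun i _ => by
        simp only [lowestEighth, coe_filter, mem_univ, true_and, Set.mem_ofPred_eq, Fin.val_castLE]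
        omega)
      (Fin.castLE_injective _).injOn
  rw [card_univ, Fintype.card_fin] at card_le
  have : (n : ℝ) ≤ 8 * #(lowestEighth n) := by exact_mod_cast (by omega : n ≤ 8 * #(lowestEighth n))
  linarith

/-- A lower bound, in units of `n ^ q`, for the difference between the entries of the Spearman
array at distance at least `n / 4` and those at distance at most `n / 8`. -/
noncomputable def spearmanGap (q : ℝ) : ℝ :=
  (1 / 4 : ℝ) ^ q - (1 / 8 : ℝ) ^ q

lemma spearmanGap_pos (hq : 0 < q) : 0 < spearmanGap q :=
  sub_pos.mpr (Real.rpow_lt_rpow (by norm_num) (by norm_num) hq)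

lemma le_abs_swapDiff_spearmanArray (hq : 0 ≤ q) (hn : 2 ≤ n) {i j k l : Fin n}
    (hi : i ∈ lowestEighth n) (hj : j ∈ lowestEighth n) (hk : k ∈ lowestEighth n)
    (hl : l ∈ lowestEighth n) :
    2 * ((n : ℝ) ^ q * spearmanGap q) ≤ |swapDiff (spearmanArray q n) i j.rev k l.rev| := by
  have hn' : (2 : ℝ) ≤ n := by exact_mod_cast hn
  have near {i k : Fin n} (hi : i ∈ lowestEighth n) (hk : k ∈ lowestEighth n) :
      spearmanArray q n i k ≤ (n : ℝ) ^ q * (1 / 8) ^ q :=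
    spearmanArray_le hq (by norm_num) (abs_sub_le_of_nonneg_of_le (Nat.cast_nonneg _)
      (cast_le_of_mem_lowestEighth hk) (Nat.cast_nonneg _) (cast_le_of_mem_lowestEighth hi))
  have far {i l : Fin n} (hi : i ∈ lowestEighth n) (hl : l ∈ lowestEighth n) :
      (n : ℝ) ^ q * (1 / 4) ^ q ≤ spearmanArray q n i l.rev := by
    refine le_spearmanArray hq (by norm_num) (le_trans ?_ (le_abs_self _))
    rw [cast_val_rev]
    linarith [cast_le_of_mem_lowestEighth hi, cast_le_of_mem_lowestEighth hl]
  have near_rev : spearmanArray q n j.rev l.rev ≤ (n : ℝ) ^ q * (1 / 8) ^ q :=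
    (spearmanArray_rev j l).trans_le (near hj hl)
  have far_rev : (n : ℝ) ^ q * (1 / 4) ^ q ≤ spearmanArray q n j.rev k := by
    simpa only [Fin.rev_rev] using (far hj hk).trans_eq (spearmanArray_rev j k.rev).symm
  rw [swapDiff, spearmanGap]
  refine le_trans ?_ (neg_le_abs _)
  linarith [near hi hk, far hi hl]

lemma le_sqrt_uniformVar_spearmanArray (hq : 0 < q) (hn : 2 ≤ n) :
    (n : ℝ) ^ q * spearmanGap q * √n / 64 ≤ √(uniformVar (permSum (spearmanArray q n))) := by
  have gap_pos := spearmanGap_pos hq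
  have n_pos : (0 : ℝ) < n := by exact_mod_cast (by omega : 0 < n)
  have spread := sq_le_card_pow_mul_uniformVar_permSum (S := lowestEighth n)
    (R := (lowestEighth n).map Fin.revPerm.toEmbedding) (a := spearmanArray q n)
    (D := 2 * ((n : ℝ) ^ q * spearmanGap q)) (by positivity)
    (by
      simp only [forall_mem_map]
      exact fun i hi j hj k hk l hl => le_abs_swapDiff_spearmanArray hq.le hn hi hj hk hl)
  rw [card_map, Fintype.card_fin] at spread
  refine Real.le_sqrt_of_sq_le (le_of_mul_le_mul_left ?_ (by positivity : 0 < 4 * (n : ℝ) ^ 3))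
  calc 4 * (n : ℝ) ^ 3 * ((n : ℝ) ^ q * spearmanGap q * √n / 64) ^ 2
      = (n / 8 * (n / 8) * (2 * ((n : ℝ) ^ q * spearmanGap q))) ^ 2 := by
        rw [div_pow, mul_pow _ √n, Real.sq_sqrt n_pos.le]
        ring
    _ ≤ (#(lowestEighth n) * #(lowestEighth n) * (2 * ((n : ℝ) ^ q * spearmanGap q))) ^ 2 := by
        gcongr <;> exact div_eight_le_card_lowestEighth
    _ ≤ _ := spread

lemma rpow_div_sqrt_uniformVar_spearmanArray_le (hq : 0 < q) (hn : 2 ≤ n) :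
    (n : ℝ) ^ q / √(uniformVar (permSum (spearmanArray q n))) ≤ 64 / spearmanGap q / √n := by
  have gap_pos := spearmanGap_pos hq
  have : (0 : ℝ) < n := by exact_mod_cast (by omega : 0 < n)
  have sd_ge := le_sqrt_uniformVar_spearmanArray hq hn
  have sd_pos := sd_ge.trans_lt' (by positivity)
  rw [div_div, div_le_div_iff₀ sd_pos (by positivity)]
  linarith

end Spearman

section LogarithmicCutoff

open Equiv

variable {n : ℕ}

lemma half_le_log (hn : 2 ≤ n) : 1 / 2 ≤ Real.log n := by
  have := Real.log_le_log two_pos (by exact_mod_cast hn : (2 : ℝ) ≤ n)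
  linarith [Real.log_two_gt_d9]

lemma exists_le_log_sq_le_two_pow (hn : 2 ≤ n) :
    ∃ m : ℕ, (m : ℝ) ≤ 5 * Real.log n ∧ (n : ℝ) ^ 2 ≤ 2 ^ m := by
  have log_ge := half_le_log hn
  refine ⟨⌈3 * Real.log n⌉₊, ?_, ?_⟩
  · linarith [Nat.ceil_lt_add_one (by linarith : 0 ≤ 3 * Real.log n)]
  · rw [← Real.log_le_log_iff (by positivity) (by positivity), Real.log_pow, Real.log_pow]
    have := Nat.le_ceil (3 * Real.log n)
    push_cast
    nlinarith [Real.log_two_gt_d9]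

lemma uniformProb_lt_cycleCount_le_log_div_sqrt (hn : 2 ≤ n) {m : ℕ}
    (hm : (n : ℝ) ^ 2 ≤ 2 ^ m) :
    uniformProb (fun c : Perm (Fin n) => m < cycleCount c) ≤ 4 * Real.log n / √n := by
  have n_ge : (2 : ℝ) ≤ n := by exact_mod_cast hn
  have : 0 < √(n : ℝ) := Real.sqrt_pos.mpr (by linarith)
  calc uniformProb (fun c : Perm (Fin n) => m < cycleCount c)
      ≤ (n + 1) / 2 ^ m := by simpa using uniformProb_lt_cycleCount_le (α := Fin n) m
    _ ≤ (n + n) / (n : ℝ) ^ 2 := by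
        gcongr
        linarith
    _ = 2 / n := by
        field_simp
        ring
    _ ≤ 2 / √n := by
        gcongr
        exact Real.sqrt_le_self_iff.mpr (.inr (by linarith))
    _ ≤ 4 * Real.log n / √n := by
        gcongr
        linarith [half_le_log hn]

end LogarithmicCutoff

theorem rhoq_sq_berry_esseen_general (q : ℝ) (hq : 0 < q) :
    ∃ C : ℝ, ∀ n : ℕ, 2 ≤ n → ∀ x : ℝ,
      |Pn (fun σ : Equiv.Perm (Fin n) =>
          (rhoq q (σ * σ) - En (rhoq q (n := n))) /
            Real.sqrt (VarN (rhoq q (n := n))) ≤ x) -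
        stdNormalCDF x| ≤ C * Real.log n / Real.sqrt n := by
  refine ⟨102 * (64 / spearmanGap q) + 8, fun n hn x => ?_⟩
  have gap_pos := spearmanGap_pos hq
  have var_pos : 0 < uniformVar (permSum (spearmanArray q n)) :=
    Real.sqrt_pos.mp ((le_sqrt_uniformVar_spearmanArray hq hn).trans_lt' (by positivity))
  obtain ⟨m, m_le, sq_le⟩ := exists_le_log_sq_le_two_pow hn
  rw [Pn_eq_uniformProb, En_eq_expect, VarN_eq_uniformVar, rhoq_eq_permSum]
  calc _ ≤ (6 * m + 36) * ((n : ℝ) ^ q / √(uniformVar (permSum (spearmanArray q n)))) +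
        2 * uniformProb (fun c : Equiv.Perm (Fin n) => m < cycleCount c) :=
        abs_uniformProb_standardize_permSum_mul_self_sub_le (abs_spearmanArray_sub_le hq.le)
          var_pos m x
    _ ≤ 102 * Real.log n * (64 / spearmanGap q / √n) + 2 * (4 * Real.log n / √n) := by
        gcongr ?_ * ?_ + 2 * ?_
        · linarith [half_le_log hn]
        · exact rpow_div_sqrt_uniformVar_spearmanArray_le hq hn
        · exact uniformProb_lt_cycleCount_le_log_div_sqrt hn sq_le
    _ = (102 * (64 / spearmanGap q) + 8) * Real.log n / √n := by ring

/-- Berry–Esseen bound for `ρ_{q,2}(σ) = ρ_q(σ²) = Σ_i |σ²(i) − i|^q`, normalized with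
the mean and standard deviation of `ρ_q`: the Kolmogorov distance to the standard
normal is `O(log n / √n)`; in particular `ρ_{q,2}` is asymptotically Gaussian. -/
theorem rhoq_sq_berry_esseen (q : ℝ) (hq : 1 ≤ q) :
    ∃ C : ℝ, ∀ n : ℕ, 2 ≤ n → ∀ x : ℝ,
      |Pn (fun σ : Equiv.Perm (Fin n) =>
          (rhoq q (σ * σ) - En (rhoq q (n := n))) /
            Real.sqrt (VarN (rhoq q (n := n))) ≤ x) -
        stdNormalCDF x| ≤ C * Real.log n / Real.sqrt n :=
  rhoq_sq_berry_esseen_general q (zero_lt_one.trans_le hq)
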